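/- Let K, J be positive integers, ξ¹,…,ξ^K ∈ ℝ^J, Q ∈ ℝ^K, μ ∈ ℝ^J, let S ∈ ℝ^{J×J} be symmetric positive definite, and let γ, η ∈ ℝ. Define P₃ = {p ∈ ℝ^K : p ≥ 0, Σ_k p_k = 1, (Σ_k p_k ξᵏ − μ)ᵀ S⁻¹ (Σ_k p_k ξᵏ − μ) ≤ γ, and η S − Σ_k p_k (ξᵏ − μ)(ξᵏ − μ)ᵀ is positive semidefinite}. Assume the Slater condition: there exists p ∈ ℝ^K with p ≥ 0, Σ_k p_k = 1, (Σ_k p_k ξᵏ − μ)ᵀ S⁻¹ (Σ_k p_k ξᵏ − μ) < γ, and η S − Σ_k p_k (ξᵏ − μ)(ξᵏ − μ)ᵀ positive definite. Then sup_{p ∈ P₃} Σ_{k=1}^K p_k Q_k equals the infimum of s + S • z₁ − 2 μᵀ z₂ + γ z₃ + η (S • Y) over all s ∈ ℝ, z₁ ∈ ℝ^{J×J}, z₂ ∈ ℝ^J, z₃ ∈ ℝ, Y ∈ ℝ^{J×J} such that the block matrix Z = [[z₁, z₂],[z₂ᵀ, z₃]] ∈ ℝ^{(J+1)×(J+1)}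 is positive semidefinite, Y is positive semidefinite, and s − 2 z₂ᵀ ξᵏ + ((ξᵏ − μ)(ξᵏ − μ)ᵀ) • Y ≥ Q_k for every k. -/

import Mathlib

open scoped BigOperators
open Matrix

/-- Frobenius inner product `A • B = trace(Aᵀ B) = Σᵢⱼ Aᵢⱼ Bᵢⱼ`. -/
def frob {n : Type*} [Fintype n] (A B : Matrix n n ℝ) : ℝ := ∑ i, ∑ j, A i j * B i j

/-- The block matrix `Z = [[z₁, z₂], [z₂ᵀ, z₃]]`. -/
def blockMat {J : ℕ} (z₁ : Matrix (Fin J) (Fin J) ℝ) (z₂ : Fin J → ℝ) (z₃ : ℝ) :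
    Matrix (Fin J ⊕ Unit) (Fin J ⊕ Unit) ℝ :=
  Matrix.fromBlocks z₁ (Matrix.of fun i _ => z₂ i) (Matrix.of fun _ j => z₂ j)
    (Matrix.of fun _ _ => z₃)

/-- Type 3 (general moment-based) ambiguity set with finite support
`ξ¹,…,ξ^K ∈ ℝ^J`, estimated mean `μ`, positive definite matrix `S`, scalars `γ, η`. -/
def Type3Set (K J : ℕ) (ξ : Fin K → Fin J → ℝ) (μ : Fin J → ℝ)
    (S : Matrix (Fin J) (Fin J) ℝ) (γ η : ℝ) : Set (Fin K → ℝ) :=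
  {p | (∀ k, 0 ≤ p k) ∧ (∑ k, p k) = 1 ∧
    (fun j => (∑ k, p k * ξ k j) - μ j) ⬝ᵥ (S⁻¹ *ᵥ fun j => (∑ k, p k * ξ k j) - μ j) ≤ γ ∧
    (η • S -
      ∑ k, p k • Matrix.vecMulVec (fun j => ξ k j - μ j) (fun j => ξ k j - μ j)).PosSemidef}

/-!
The mean constraint is, by a Schur complement, positive semidefiniteness of the matrix
`[[S, d], [dᵀ, γ]]` with `d = Σ_k p_k ξᵏ - μ`; as `Σ_k p_k = 1`, this matrix is the `p`-average of
the matrices with `d = ξᵏ - μ`. So the worst-case expectation maximizes a linear functional over the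
points of the simplex that a linear map sends into a convex cone. Slater's condition makes the image
of some point an order unit of that cone, and the Riesz extension theorem, applied to the graph of
the linear map, then yields a Lagrange multiplier attaining the optimal value. Multipliers, being
elements of the dual cone, are pairs of positive semidefinite matrices paired by the Frobenius
product.
-/

section ConicDuality

variable {E F ι : Type*} [AddCommGroup E] [Module ℝ E] [AddCommGroup F] [Module ℝ F] [Fintype ι]

/-- Order units of a convex cone: the points from which every vector of the space is absorbed,
that is, the algebraic interior of the cone. They express Slater's condition without a topology. -/
def IsOrderUnit (C : PointedCone ℝ E) (e : E) : Prop :=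
  ∀ x, ∃ t : ℝ, 0 ≤ t ∧ x + t • e ∈ C

theorem IsOrderUnit.mem {C : PointedCone ℝ E} {e : E} (he : IsOrderUnit C e) : e ∈ C := by
  obtain ⟨t, ht, hmem⟩ := he e
  have hpos : 0 < 1 + t := by positivity
  have : (1 + t)⁻¹ • (e + t • e) = e := by
    rw [inv_smul_eq_iff₀ hpos.ne', add_smul, one_smul]
  exact this ▸ C.smul_mem (inv_nonneg.mpr hpos.le) hmem

theorem IsOrderUnit.add_smul_mem {C : PointedCone ℝ E} {e x : E} (he : IsOrderUnit C e)
    {s t : ℝ} (hst : s ≤ t) (hs : x + s • e ∈ C) : x + t • e ∈ C := by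
  have : x + t • e = (x + s • e) + (t - s) • e := by module
  exact this ▸ add_mem hs (C.smul_mem (sub_nonneg.mpr hst) he.mem)

theorem IsOrderUnit.prodMk {C : PointedCone ℝ E} {D : PointedCone ℝ F} {e : E} {f : F}
    (he : IsOrderUnit C e) (hf : IsOrderUnit D f) : IsOrderUnit (Submodule.prod C D) (e, f) := by
  rintro ⟨x, y⟩
  obtain ⟨s, hs, hx⟩ := he x
  obtain ⟨t, -, hy⟩ := hf y
  exact ⟨max s t, le_max_of_le_left hs,
    he.add_smul_mem (le_max_left s t) hx, hf.add_smul_mem (le_max_right s t) hy⟩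

-- The functional `(p, L p) ↦ f p` on the graph of `L` is nonnegative on `P × C`, and the order unit
-- makes the graph meet every translate of `P × C`; `φ` is a Riesz extension restricted to `0 × E`.
theorem exists_mem_dual_apply_le_of_isOrderUnit {P : PointedCone ℝ F} {C : PointedCone ℝ E}
    {L : F →ₗ[ℝ] E} {f : F →ₗ[ℝ] ℝ} (hf : ∀ p ∈ P, L p ∈ C → 0 ≤ f p) {p₀ : F}
    (hp₀ : p₀ ∈ P) (hL : IsOrderUnit C (L p₀)) :
    ∃ φ ∈ PointedCone.dual (Module.Dual.eval ℝ E) (C : Set E), ∀ p ∈ P, φ (L p) ≤ f p := by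
  obtain ⟨g, hg, hpos⟩ := riesz_extension (Submodule.prod P C)
    ((f ∘ₗ LinearMap.fst ℝ F E).toPMap L.graph)
    (by
      rintro ⟨⟨p, x⟩, hx⟩ ⟨hp, hxC⟩
      obtain rfl : x = L p := hx
      exact hf p hp hxC)
    (by
      rintro ⟨a, x⟩
      obtain ⟨t, ht, hx⟩ := hL (x - L a)
      refine ⟨⟨(t • p₀ - a, L (t • p₀ - a)), rfl⟩, ?_, ?_⟩
      · change t • p₀ - a + a ∈ P
        rw [sub_add_cancel]
        exact P.smul_mem ht hp₀
      · change L (t • p₀ - a) + x ∈ C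
        rwa [map_sub, map_smul, sub_add_comm])
  refine ⟨g ∘ₗ LinearMap.inr ℝ F E, fun x hx ↦ hpos _ ⟨P.zero_mem, hx⟩, fun p hp ↦ ?_⟩
  calc g (0, L p) ≤ g (p, 0) + g (0, L p) := le_add_of_nonneg_left (hpos _ ⟨hp, C.zero_mem⟩)
    _ = g (p, L p) := by rw [← map_add, Prod.mk_add_mk, add_zero, zero_add]
    _ = f p := hg ⟨(p, L p), rfl⟩

-- Both sides are homogeneous in `p`, so `p` may be rescaled to the simplex unless it vanishes.
theorem dotProduct_le_of_mem_upperBounds {C : PointedCone ℝ E} {G : ι → E} {q : ι → ℝ} {v : ℝ}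
    (hv : v ∈ upperBounds ((· ⬝ᵥ q) '' {p ∈ stdSimplex ℝ ι | ∑ k, p k • G k ∈ C}))
    {p : ι → ℝ} (hp : 0 ≤ p) (hpC : ∑ k, p k • G k ∈ C) : p ⬝ᵥ q ≤ (∑ k, p k) * v := by
  obtain hp_sum | hp_sum := (Fintype.sum_nonneg hp).eq_or_lt
  · obtain rfl := (Fintype.sum_eq_zero_iff_of_nonneg hp).mp hp_sum.symm
    simp
  · have ht : 0 ≤ (∑ k, p k)⁻¹ := inv_nonneg.mpr hp_sum.le
    have hmem : (∑ k, p k)⁻¹ • p ∈ {p ∈ stdSimplex ℝ ι | ∑ k, p k • G k ∈ C} := by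
      refine ⟨⟨fun k ↦ mul_nonneg ht (hp k), ?_⟩, ?_⟩
      · simp only [Pi.smul_apply, smul_eq_mul, ← Finset.mul_sum, inv_mul_cancel₀ hp_sum.ne']
      · simpa only [Pi.smul_apply, smul_assoc, ← Finset.smul_sum] using C.smul_mem ht hpC
    have hle := hv (Set.mem_image_of_mem _ hmem)
    rwa [smul_dotProduct, smul_eq_mul, inv_mul_le_iff₀ hp_sum] at hle

theorem dotProduct_le_of_forall_add_apply_le {G : ι → E} {q : ι → ℝ} {v : ℝ} {φ : Module.Dual ℝ E}
    (hφv : ∀ k, q k + φ (G k) ≤ v) {p : ι → ℝ} (hp : p ∈ stdSimplex ℝ ι)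
    (hφ : 0 ≤ φ (∑ k, p k • G k)) : p ⬝ᵥ q ≤ v := by
  calc p ⬝ᵥ q ≤ p ⬝ᵥ q + φ (∑ k, p k • G k) := le_add_of_nonneg_right hφ
    _ = ∑ k, p k * (q k + φ (G k)) := by
      simp only [dotProduct, map_sum, map_smul, smul_eq_mul, mul_add, Finset.sum_add_distrib]
    _ ≤ ∑ k, p k * v := by gcongr with k; exacts [hp.1 k, hφv k]
    _ = v := by rw [← Finset.sum_mul, hp.2, one_mul]

theorem mem_dual_prod_iff {C : PointedCone ℝ E} {D : PointedCone ℝ F} {φ : Module.Dual ℝ (E × F)} :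
    φ ∈ PointedCone.dual (Module.Dual.eval ℝ (E × F)) (Submodule.prod C D : Set (E × F)) ↔
      φ ∘ₗ .inl ℝ E F ∈ PointedCone.dual (Module.Dual.eval ℝ E) (C : Set E) ∧
      φ ∘ₗ .inr ℝ E F ∈ PointedCone.dual (Module.Dual.eval ℝ F) (D : Set F) := by
  refine ⟨fun h ↦ ⟨fun x hx ↦ h ⟨hx, D.zero_mem⟩, fun y hy ↦ h ⟨C.zero_mem, hy⟩⟩, ?_⟩
  rintro ⟨hC, hD⟩ ⟨x, y⟩ ⟨hx, hy⟩
  calc 0 ≤ φ (x, 0) + φ (0, y) := add_nonneg (hC hx) (hD hy)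
    _ = φ (x, y) := by rw [← map_add, Prod.mk_add_mk, add_zero, zero_add]

theorem isLeast_conic_dual {C : PointedCone ℝ E} {G : ι → E} (q : ι → ℝ) {p₀ : ι → ℝ}
    (hp₀ : p₀ ∈ stdSimplex ℝ ι) (hC : IsOrderUnit C (∑ k, p₀ k • G k)) :
    IsLeast {v | ∃ φ ∈ PointedCone.dual (Module.Dual.eval ℝ E) (C : Set E),
        ∀ k, q k + φ (G k) ≤ v}
      (sSup ((· ⬝ᵥ q) '' {p ∈ stdSimplex ℝ ι | ∑ k, p k • G k ∈ C})) := by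
  classical
  set primal := (· ⬝ᵥ q) '' {p ∈ stdSimplex ℝ ι | ∑ k, p k • G k ∈ C}
  have hbdd : BddAbove primal :=
    ((isCompact_stdSimplex ℝ ι).bddAbove_image (f := (· ⬝ᵥ q)) (by fun_prop)).mono
      (Set.image_mono (Set.sep_subset _ _))
  constructor
  · obtain ⟨φ, hφ, hle⟩ := exists_mem_dual_apply_le_of_isOrderUnit
      (P := PointedCone.positive ℝ (ι → ℝ)) (L := Fintype.linearCombination ℝ G)
      (f := Fintype.linearCombination ℝ fun k ↦ sSup primal - q k) (C := C)
      (fun p hp hpC ↦ by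
        have : ∑ k, p k * q k ≤ (∑ k, p k) * sSup primal :=
          dotProduct_le_of_mem_upperBounds (fun _ ↦ le_csSup hbdd) hp hpC
        simpa only [Fintype.linearCombination_apply, smul_eq_mul, mul_sub,
          Finset.sum_sub_distrib, ← Finset.sum_mul, sub_nonneg] using this)
      (p₀ := p₀) hp₀.1 hC
    refine ⟨φ, hφ, fun k ↦ ?_⟩
    have hk := hle (Pi.single k 1) (Pi.single_nonneg.mpr zero_le_one)
    simp only [Fintype.linearCombination_apply_single, one_smul] at hk
    linarith
  · rintro v ⟨φ, hφ, hφv⟩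
    refine csSup_le ⟨_, p₀, ⟨hp₀, hC.mem⟩, rfl⟩ ?_
    rintro _ ⟨p, ⟨hp, hpC⟩, rfl⟩
    exact dotProduct_le_of_forall_add_apply_le hφv hp (hφ hpC)

end ConicDuality

section SemidefiniteCone

variable {m n : Type*} [Fintype m] [Fintype n]

/-- The matrices with nonnegative quadratic form, without a symmetry requirement. Unlike the cone
of positive semidefinite matrices, it has order units in the space of all matrices, while its dual
cone still consists of symmetric matrices only. -/
def quadNonnegCone (n : Type*) [Fintype n] : PointedCone ℝ (Matrix n n ℝ) where
  carrier := {A | ∀ x, 0 ≤ x ⬝ᵥ A *ᵥ x}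
  zero_mem' x := by simp
  add_mem' hA hB x := by
    rw [add_mulVec, dotProduct_add]
    exact add_nonneg (hA x) (hB x)
  smul_mem' c A hA x := by
    change 0 ≤ x ⬝ᵥ ((c : ℝ) • A) *ᵥ x
    rw [smul_mulVec, dotProduct_smul]
    exact mul_nonneg c.2 (hA x)

theorem mem_quadNonnegCone {A : Matrix n n ℝ} : A ∈ quadNonnegCone n ↔ ∀ x, 0 ≤ x ⬝ᵥ A *ᵥ x :=
  Iff.rfl

theorem mem_quadNonnegCone_iff_posSemidef {A : Matrix n n ℝ} (hA : A.IsHermitian) :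
    A ∈ quadNonnegCone n ↔ A.PosSemidef := by
  simp only [posSemidef_iff_dotProduct_mulVec, hA, true_and, star_trivial, mem_quadNonnegCone]

theorem transpose_mul_mul_mem_quadNonnegCone {A : Matrix m m ℝ} (hA : A ∈ quadNonnegCone m)
    (B : Matrix m n ℝ) : Bᵀ * A * B ∈ quadNonnegCone n := fun x ↦ by
  rw [← mulVec_mulVec, ← mulVec_mulVec, dotProduct_mulVec, vecMul_transpose]
  exact hA (B *ᵥ x)

theorem isOrderUnit_one_quadNonnegCone [DecidableEq n] : IsOrderUnit (quadNonnegCone n) 1 := by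
  intro M
  let T := toEuclideanCLM (n := n) (𝕜 := ℝ) M
  refine ⟨‖T‖, norm_nonneg T, fun x ↦ ?_⟩
  have hT : |x ⬝ᵥ M *ᵥ x| ≤ ‖T‖ * (x ⬝ᵥ x) := by
    let y : EuclideanSpace ℝ n := WithLp.toLp 2 x
    calc |x ⬝ᵥ M *ᵥ x| = |inner ℝ y (T y)| := by rw [inner_toEuclideanCLM]
      _ ≤ ‖y‖ * ‖T y‖ := abs_real_inner_le_norm _ _
      _ ≤ ‖y‖ * (‖T‖ * ‖y‖) := by gcongr; exact T.le_opNorm y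
      _ = ‖T‖ * (x ⬝ᵥ x) := by
        rw [mul_left_comm, ← real_inner_self_eq_norm_mul_norm,
          EuclideanSpace.inner_eq_star_dotProduct, star_trivial]
  rw [add_mulVec, smul_mulVec, one_mulVec, dotProduct_add, dotProduct_smul, smul_eq_mul]
  linarith [neg_le_of_abs_le hT]

open scoped MatrixOrder in
theorem isOrderUnit_quadNonnegCone_of_posDef {A : Matrix n n ℝ} (hA : A.PosDef) :
    IsOrderUnit (quadNonnegCone n) A := by
  classical
  obtain ⟨B, hB, rfl⟩ := CStarAlgebra.isStrictlyPositive_iff_eq_star_mul_self.mp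
    hA.isStrictlyPositive
  intro M
  obtain ⟨t, ht, hM⟩ := isOrderUnit_one_quadNonnegCone (B⁻¹ᵀ * M * B⁻¹)
  refine ⟨t, ht, ?_⟩
  rw [star_eq_conjTranspose, conjTranspose_eq_transpose_of_trivial]
  have hBB : B⁻¹ * B = 1 := nonsing_inv_mul B ((isUnit_iff_isUnit_det B).mp hB)
  have hBB' : Bᵀ * B⁻¹ᵀ = 1 := by rw [← transpose_mul, hBB, transpose_one]
  have hcongr : Bᵀ * (B⁻¹ᵀ * M * B⁻¹ + t • 1) * B = M + t • (Bᵀ * B) := by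
    calc Bᵀ * (B⁻¹ᵀ * M * B⁻¹ + t • 1) * B
        = (Bᵀ * B⁻¹ᵀ) * M * (B⁻¹ * B) + t • (Bᵀ * B) := by
          simp only [mul_add, add_mul, mul_assoc, mul_smul_comm, smul_mul_assoc, one_mul]
      _ = M + t • (Bᵀ * B) := by rw [hBB, hBB', one_mul, mul_one]
  exact hcongr ▸ transpose_mul_mul_mem_quadNonnegCone hM B

theorem frob_transpose_mul_self (A : Matrix n n ℝ) (B : Matrix m n ℝ) :
    frob A (Bᵀ * B) = ∑ i, B i ⬝ᵥ A *ᵥ B i := by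
  calc frob A (Bᵀ * B) = ∑ j, ∑ k, ∑ i, B i j * (A j k * B i k) := by
        simp only [frob, mul_apply, transpose_apply, Finset.mul_sum, mul_left_comm]
    _ = ∑ j, ∑ i, ∑ k, B i j * (A j k * B i k) := by
        exact Finset.sum_congr rfl fun _ _ ↦ Finset.sum_comm
    _ = ∑ i, ∑ j, ∑ k, B i j * (A j k * B i k) := Finset.sum_comm
    _ = ∑ i, B i ⬝ᵥ A *ᵥ B i := by simp only [dotProduct, mulVec, Finset.mul_sum]

open scoped MatrixOrder in
theorem frob_nonneg {A Z : Matrix n n ℝ} (hA : A ∈ quadNonnegCone n) (hZ : Z.PosSemidef) :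
    0 ≤ frob A Z := by
  classical
  obtain ⟨B, rfl⟩ := CStarAlgebra.nonneg_iff_eq_star_mul_self.mp hZ.nonneg
  rw [star_eq_conjTranspose, conjTranspose_eq_transpose_of_trivial, frob_transpose_mul_self]
  exact Fintype.sum_nonneg fun i ↦ hA (B i)

/-- The Frobenius pairing with a fixed matrix, as a linear functional. -/
def frobDual (Z : Matrix n n ℝ) : Module.Dual ℝ (Matrix n n ℝ) where
  toFun A := frob A Z
  map_add' A B := by simp only [frob, Matrix.add_apply, add_mul, Finset.sum_add_distrib]
  map_smul' c A := by
    simp only [frob, Matrix.smul_apply, smul_eq_mul, mul_assoc, Finset.mul_sum, RingHom.id_apply]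

theorem frobDual_apply (A Z : Matrix n n ℝ) : frobDual Z A = frob A Z := rfl

theorem exists_eq_frobDual (φ : Module.Dual ℝ (Matrix n n ℝ)) : ∃ Z, φ = frobDual Z := by
  classical
  refine ⟨of fun i j ↦ φ (single i j 1), LinearMap.ext fun A ↦ ?_⟩
  calc φ A = ∑ i, ∑ j, φ (single i j (A i j)) := by
        simp_rw [← map_sum, ← matrix_eq_sum_single]
    _ = ∑ i, ∑ j, A i j * φ (single i j 1) := by
        simp_rw [← smul_eq_mul, ← map_smul, smul_single, smul_eq_mul, mul_one]

theorem frob_vecMulVec (x y : n → ℝ) (Z : Matrix n n ℝ) : frob (vecMulVec x y) Z = x ⬝ᵥ Z *ᵥ y := by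
  simp only [frob, vecMulVec_apply, dotProduct, mulVec, Finset.mul_sum, mul_assoc, mul_comm (y _)]

theorem isHermitian_vecMulVec_self {l : Type*} (x : l → ℝ) : (vecMulVec x x).IsHermitian :=
  conjTranspose_vecMulVec x x

theorem vecMulVec_self_mem_quadNonnegCone (x : n → ℝ) : vecMulVec x x ∈ quadNonnegCone n :=
  (mem_quadNonnegCone_iff_posSemidef (isHermitian_vecMulVec_self x)).mpr
    (posSemidef_vecMulVec_self_star x)

theorem sub_transpose_mem_quadNonnegCone (A : Matrix n n ℝ) :
    A - Aᵀ ∈ quadNonnegCone n := fun x ↦ by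
  rw [sub_mulVec, dotProduct_sub, mulVec_transpose, dotProduct_comm x (x ᵥ* A),
    ← dotProduct_mulVec, sub_self]

theorem frob_single [DecidableEq n] (i j : n) (Z : Matrix n n ℝ) :
    frob (single i j 1) Z = Z i j := by
  simp [frob, single_apply, ite_and]

theorem frobDual_mem_dual_iff {Z : Matrix n n ℝ} :
    frobDual Z ∈ PointedCone.dual (Module.Dual.eval ℝ _) (quadNonnegCone n : Set (Matrix n n ℝ)) ↔
      Z.PosSemidef := by
  classical
  refine ⟨fun h ↦ ?_, fun hZ A hA ↦ frob_nonneg hA hZ⟩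
  have hsymm (i j : n) : Z i j ≤ Z j i := by
    have : 0 ≤ frobDual Z (single j i 1 - (single j i 1)ᵀ) := h (sub_transpose_mem_quadNonnegCone _)
    rwa [transpose_single, map_sub, frobDual_apply, frobDual_apply, frob_single, frob_single,
      sub_nonneg] at this
  have hZ : Z.IsHermitian := .ext fun i j ↦ (hsymm j i).antisymm (hsymm i j)
  refine .of_dotProduct_mulVec_nonneg hZ fun x ↦ ?_
  rw [star_trivial, ← frob_vecMulVec]
  exact h (vecMulVec_self_mem_quadNonnegCone x)

theorem exists_mem_dual_prod_quadNonnegCone_iff {ι : Type*} {G : ι → Matrix m m ℝ}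
    {H : ι → Matrix n n ℝ} {b : ι → ℝ} :
    (∃ φ ∈ PointedCone.dual (Module.Dual.eval ℝ (Matrix m m ℝ × Matrix n n ℝ))
        (Submodule.prod (quadNonnegCone m) (quadNonnegCone n) : Set (Matrix m m ℝ × Matrix n n ℝ)),
        ∀ k, φ (G k, H k) ≤ b k) ↔
      ∃ Z Y, Z.PosSemidef ∧ Y.PosSemidef ∧ ∀ k, frob (G k) Z + frob (H k) Y ≤ b k := by
  constructor
  · rintro ⟨φ, hφ, hφb⟩
    obtain ⟨Z, hZ⟩ := exists_eq_frobDual (φ ∘ₗ .inl ℝ _ _)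
    obtain ⟨Y, hY⟩ := exists_eq_frobDual (φ ∘ₗ .inr ℝ _ _)
    rw [mem_dual_prod_iff, hZ, hY, frobDual_mem_dual_iff, frobDual_mem_dual_iff] at hφ
    refine ⟨Z, Y, hφ.1, hφ.2, fun k ↦ (hφb k).trans_eq' ?_⟩
    rw [← frobDual_apply, ← frobDual_apply, ← hZ, ← hY]
    simp [← map_add]
  · rintro ⟨Z, Y, hZ, hY, hb⟩
    refine ⟨(frobDual Z).coprod (frobDual Y), ?_, hb⟩
    rw [mem_dual_prod_iff, LinearMap.coprod_inl, LinearMap.coprod_inr]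
    exact ⟨frobDual_mem_dual_iff.mpr hZ, frobDual_mem_dual_iff.mpr hY⟩

theorem isHermitian_sum_smul {l ι : Type*} [Fintype ι] {G : ι → Matrix l l ℝ}
    (hG : ∀ k, (G k).IsHermitian) (p : ι → ℝ) : (∑ k, p k • G k).IsHermitian := by
  simp only [IsHermitian, conjTranspose_sum, conjTranspose_smul, star_trivial, (hG _).eq]

theorem isLeast_semidefinite_dual {ι : Type*} [Fintype ι] {G : ι → Matrix m m ℝ}
    {H : ι → Matrix n n ℝ} (hG : ∀ k, (G k).IsHermitian) (hH : ∀ k, (H k).IsHermitian)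
    (q : ι → ℝ) {p₀ : ι → ℝ} (hp₀ : p₀ ∈ stdSimplex ℝ ι) (hG₀ : (∑ k, p₀ k • G k).PosDef)
    (hH₀ : (∑ k, p₀ k • H k).PosDef) :
    IsLeast {v | ∃ Z Y, Z.PosSemidef ∧ Y.PosSemidef ∧ ∀ k, q k + frob (G k) Z + frob (H k) Y ≤ v}
      (sSup ((· ⬝ᵥ q) '' {p ∈ stdSimplex ℝ ι |
        (∑ k, p k • G k).PosSemidef ∧ (∑ k, p k • H k).PosSemidef})) := by
  have hsum (p : ι → ℝ) : ∑ k, p k • (G k, H k) = (∑ k, p k • G k, ∑ k, p k • H k) := by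
    simp only [Prod.smul_mk, Prod.ext_iff, Prod.fst_sum, Prod.snd_sum, and_self]
  have key := isLeast_conic_dual (C := Submodule.prod (quadNonnegCone m) (quadNonnegCone n))
    (G := fun k ↦ (G k, H k)) q hp₀ <| by
      rw [hsum]
      exact (isOrderUnit_quadNonnegCone_of_posDef hG₀).prodMk
        (isOrderUnit_quadNonnegCone_of_posDef hH₀)
  simpa only [hsum, Submodule.mem_prod,
    mem_quadNonnegCone_iff_posSemidef (isHermitian_sum_smul hG _),
    mem_quadNonnegCone_iff_posSemidef (isHermitian_sum_smul hH _), ← le_sub_iff_add_le',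
    exists_mem_dual_prod_quadNonnegCone_iff, add_assoc] using key

theorem frob_smul_sub (c : ℝ) (A B Z : Matrix n n ℝ) :
    frob (c • A - B) Z = c * frob A Z - frob B Z := by
  simp only [← frobDual_apply, map_sub, map_smul, smul_eq_mul]

end SemidefiniteCone

section MomentMatrices

variable {ι : Type*} [Fintype ι] {J : ℕ} {S : Matrix (Fin J) (Fin J) ℝ}

theorem isHermitian_blockMat (hS : S.IsHermitian) (d : Fin J → ℝ) (γ : ℝ) :
    (blockMat S d γ).IsHermitian :=
  isHermitian_fromBlocks_iff.mpr ⟨hS, rfl, rfl, rfl⟩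

theorem exists_eq_blockMat_of_isHermitian {Z : Matrix (Fin J ⊕ Unit) (Fin J ⊕ Unit) ℝ}
    (hZ : Z.IsHermitian) : ∃ z₁ z₂ z₃, Z = blockMat z₁ z₂ z₃ := by
  refine ⟨Z.toBlocks₁₁, fun i ↦ Z (.inl i) (.inr ()), Z (.inr ()) (.inr ()), ?_⟩
  ext (i | _) (j | _)
  exacts [rfl, rfl, (hZ.apply _ _).symm, rfl]

theorem frob_blockMat (S z₁ : Matrix (Fin J) (Fin J) ℝ) (d z₂ : Fin J → ℝ) (γ z₃ : ℝ) :
    frob (blockMat S d γ) (blockMat z₁ z₂ z₃) = frob S z₁ + 2 * (d ⬝ᵥ z₂) + γ * z₃ := by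
  simp only [frob, blockMat, dotProduct, Fintype.sum_sum_type, Finset.sum_add_distrib,
    fromBlocks_apply₁₁, fromBlocks_apply₁₂, fromBlocks_apply₂₁, fromBlocks_apply₂₂, of_apply,
    Finset.univ_unique, Finset.sum_singleton]
  ring

theorem sum_smul_blockMat {p : ι → ℝ} (hp : ∑ k, p k = 1) (S : Matrix (Fin J) (Fin J) ℝ)
    (d : ι → Fin J → ℝ) (γ : ℝ) :
    ∑ k, p k • blockMat S (d k) γ = blockMat S (∑ k, p k • d k) γ := by
  ext (i | i) (j | j) <;>
    simp [blockMat, Matrix.sum_apply, ← Finset.sum_mul, hp]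

theorem blockMat_eq_fromBlocks (S : Matrix (Fin J) (Fin J) ℝ) (d : Fin J → ℝ) (γ : ℝ) :
    blockMat S d γ = fromBlocks S (replicateCol Unit d) (replicateCol Unit d)ᴴ
      (diagonal fun _ ↦ γ) := by
  ext (i | i) (j | j) <;> simp [blockMat]

theorem diagonal_sub_replicateCol_mul {n : Type*} [Fintype n] (A : Matrix n n ℝ) (d : n → ℝ)
    (γ : ℝ) :
    (diagonal fun _ : Unit ↦ γ) - (replicateCol Unit d)ᴴ * A * replicateCol Unit d =
      diagonal fun _ ↦ γ - d ⬝ᵥ A *ᵥ d := by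
  ext
  simp [Matrix.mul_assoc, Matrix.mul_apply, dotProduct, mulVec]

theorem posSemidef_blockMat_iff (hS : S.PosDef) {d : Fin J → ℝ} {γ : ℝ} :
    (blockMat S d γ).PosSemidef ↔ d ⬝ᵥ S⁻¹ *ᵥ d ≤ γ := by
  let _ := hS.isUnit.invertible
  rw [blockMat_eq_fromBlocks, hS.fromBlocks₁₁, diagonal_sub_replicateCol_mul,
    posSemidef_diagonal_iff, forall_const, sub_nonneg]

theorem posDef_blockMat (hS : S.PosDef) {d : Fin J → ℝ} {γ : ℝ} (hd : d ⬝ᵥ S⁻¹ *ᵥ d < γ) :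
    (blockMat S d γ).PosDef := by
  let _ := hS.isUnit.invertible
  rw [((posSemidef_blockMat_iff hS).mpr hd.le).posDef_iff_det_ne_zero, blockMat_eq_fromBlocks,
    det_fromBlocks₁₁, invOf_eq_nonsing_inv, diagonal_sub_replicateCol_mul, det_diagonal,
    Finset.univ_unique, Finset.prod_singleton]
  exact mul_ne_zero hS.det_pos.ne' (sub_pos.mpr hd).ne'

theorem sum_smul_sub_left {M : Type*} [AddCommGroup M] [Module ℝ M] {p : ι → ℝ}
    (hp : ∑ k, p k = 1) (c : M) (a : ι → M) : ∑ k, p k • (c - a k) = c - ∑ k, p k • a k := by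
  simp only [smul_sub, Finset.sum_sub_distrib, ← Finset.sum_smul, hp, one_smul]

theorem sum_smul_blockMat_sub {p : ι → ℝ} (hp : ∑ k, p k = 1) (S : Matrix (Fin J) (Fin J) ℝ)
    (ξ : ι → Fin J → ℝ) (μ : Fin J → ℝ) (γ : ℝ) :
    ∑ k, p k • blockMat S (ξ k - μ) γ =
      blockMat S (fun j ↦ (∑ k, p k * ξ k j) - μ j) γ := by
  rw [sum_smul_blockMat hp]
  congr 1
  ext j
  simp [mul_sub, Finset.sum_sub_distrib, ← Finset.sum_mul, hp]

end MomentMatrices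

section Type3

variable {K J : ℕ} {S : Matrix (Fin J) (Fin J) ℝ} {ξ : Fin K → Fin J → ℝ} {μ : Fin J → ℝ} {γ η : ℝ}

theorem mem_type3Set_iff (hS : S.PosDef) {p : Fin K → ℝ} :
    p ∈ Type3Set K J ξ μ S γ η ↔ p ∈ stdSimplex ℝ (Fin K) ∧
      (∑ k, p k • blockMat S (ξ k - μ) γ).PosSemidef ∧
      (∑ k, p k • (η • S - vecMulVec (ξ k - μ) (ξ k - μ))).PosSemidef := by
  suffices h : p ∈ stdSimplex ℝ (Fin K) → (p ∈ Type3Set K J ξ μ S γ η ↔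
      (∑ k, p k • blockMat S (ξ k - μ) γ).PosSemidef ∧
      (∑ k, p k • (η • S - vecMulVec (ξ k - μ) (ξ k - μ))).PosSemidef) from
    ⟨fun hp ↦ ⟨⟨hp.1, hp.2.1⟩, (h ⟨hp.1, hp.2.1⟩).mp hp⟩, fun hp ↦ (h hp.1).mpr hp.2⟩
  intro hp
  rw [sum_smul_blockMat_sub hp.2, posSemidef_blockMat_iff hS, sum_smul_sub_left hp.2]
  exact ⟨fun h ↦ h.2.2, fun h ↦ ⟨hp.1, hp.2, h⟩⟩

theorem lagrangian_le_iff {z₁ Y : Matrix (Fin J) (Fin J) ℝ} {z₂ x : Fin J → ℝ} {z₃ s q : ℝ} :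
    q + frob (blockMat S (x - μ) γ) (blockMat z₁ z₂ z₃) +
        frob (η • S - vecMulVec (x - μ) (x - μ)) Y ≤
      s + frob S z₁ - 2 * (∑ j, μ j * z₂ j) + γ * z₃ + η * frob S Y ↔
    q ≤ s - 2 * (∑ j, z₂ j * x j) +
      frob (vecMulVec (x - μ) (x - μ)) Y := by
  have hdot : (x - μ) ⬝ᵥ z₂ = (∑ j, z₂ j * x j) - ∑ j, μ j * z₂ j := by
    simp only [dotProduct, Pi.sub_apply, sub_mul, Finset.sum_sub_distrib, mul_comm (x _)]
  rw [frob_blockMat, frob_smul_sub, hdot]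
  constructor <;> intro h <;> linarith

theorem exists_type3_dual_feasible_iff {Q : Fin K → ℝ} {v : ℝ} :
    (∃ s z₃ : ℝ, ∃ z₁ Y : Matrix (Fin J) (Fin J) ℝ, ∃ z₂ : Fin J → ℝ,
      (blockMat z₁ z₂ z₃).PosSemidef ∧ Y.PosSemidef ∧
      (∀ k, Q k ≤ s - 2 * (∑ j, z₂ j * ξ k j) +
        frob (vecMulVec (fun j ↦ ξ k j - μ j) (fun j ↦ ξ k j - μ j)) Y) ∧
      v = s + frob S z₁ - 2 * (∑ j, μ j * z₂ j) + γ * z₃ + η * frob S Y) ↔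
    ∃ Z Y, Z.PosSemidef ∧ Y.PosSemidef ∧
      ∀ k, Q k + frob (blockMat S (ξ k - μ) γ) Z +
        frob (η • S - vecMulVec (ξ k - μ) (ξ k - μ)) Y ≤ v := by
  constructor
  · rintro ⟨s, z₃, z₁, Y, z₂, hZ, hY, hQ, rfl⟩
    exact ⟨_, Y, hZ, hY, fun k ↦ lagrangian_le_iff.mpr (hQ k)⟩
  · rintro ⟨Z, Y, hZ, hY, hv⟩
    obtain ⟨z₁, z₂, z₃, rfl⟩ := exists_eq_blockMat_of_isHermitian hZ.isHermitian
    obtain ⟨s, rfl⟩ : ∃ s, v =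
        s + frob S z₁ - 2 * (∑ j, μ j * z₂ j) + γ * z₃ + η * frob S Y :=
      ⟨v - frob S z₁ + 2 * (∑ j, μ j * z₂ j) - γ * z₃ - η * frob S Y, by ring⟩
    exact ⟨s, z₃, z₁, Y, z₂, hZ, hY, fun k ↦ lagrangian_le_iff.mp (hv k), rfl⟩

end Type3

/-- Lagrangian strong duality for the Type-3 ambiguity set under Slater's condition:
the worst-case expectation equals the optimal value of the dual semidefinite program. -/
theorem stmt5 (K J : ℕ) (hK : 0 < K) (hJ : 0 < J)
    (ξ : Fin K → Fin J → ℝ) (Q : Fin K → ℝ) (μ : Fin J → ℝ)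
    (S : Matrix (Fin J) (Fin J) ℝ) (hS : S.PosDef) (γ η : ℝ)
    (hslater : ∃ p : Fin K → ℝ, (∀ k, 0 ≤ p k) ∧ (∑ k, p k) = 1 ∧
      (fun j => (∑ k, p k * ξ k j) - μ j) ⬝ᵥ (S⁻¹ *ᵥ fun j => (∑ k, p k * ξ k j) - μ j) < γ ∧
      (η • S -
        ∑ k, p k • Matrix.vecMulVec (fun j => ξ k j - μ j) (fun j => ξ k j - μ j)).PosDef) :
    sSup {r : ℝ | ∃ p ∈ Type3Set K J ξ μ S γ η, r = ∑ k, p k * Q k} =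
    sInf {v : ℝ | ∃ s z₃ : ℝ, ∃ z₁ Y : Matrix (Fin J) (Fin J) ℝ, ∃ z₂ : Fin J → ℝ,
      (blockMat z₁ z₂ z₃).PosSemidef ∧ Y.PosSemidef ∧
      (∀ k, Q k ≤ s - 2 * (∑ j, z₂ j * ξ k j) +
        frob (Matrix.vecMulVec (fun j => ξ k j - μ j) (fun j => ξ k j - μ j)) Y) ∧
      v = s + frob S z₁ - 2 * (∑ j, μ j * z₂ j) + γ * z₃ + η * frob S Y} := by
  obtain ⟨p₀, hp₀, hp₀_sum, hmean, hcov⟩ := hslater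
  have hmin := isLeast_semidefinite_dual
    (G := fun k ↦ blockMat S (ξ k - μ) γ)
    (H := fun k ↦ η • S - vecMulVec (ξ k - μ) (ξ k - μ))
    (fun k ↦ isHermitian_blockMat hS.isHermitian _ γ)
    (fun k ↦ (hS.isHermitian.smul (.all η)).sub (isHermitian_vecMulVec_self _)) Q
    ⟨hp₀, hp₀_sum⟩
    (by rw [sum_smul_blockMat_sub hp₀_sum]; exact posDef_blockMat hS hmean)
    (by rw [sum_smul_sub_left hp₀_sum]; exact hcov)
  simp only [← mem_type3Set_iff hS, ← exists_type3_dual_feasible_iff] at hmin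
  rw [hmin.csInf_eq]
  congr 1
  ext r
  simp only [Set.mem_image, eq_comm, dotProduct, Set.mem_ofPred_eq]
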